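/- arXiv:1412.7526 — 3 statements merged into one kernel-verified Lean document; each statement's English description precedes it below -/
import Mathlib

section
/- The operator T is continuous from C(J,𝒮) to C(J,𝒮). (Part of Proposition 2.2(ii).) -/
open Set MeasureTheory

noncomputable section

/-- Projection of `ℝ` onto the half line `J = [0, ∞)`. -/
def pj (s : ℝ) : Set.Ici (0:ℝ) := ⟨max 0 s, le_max_left 0 s⟩

/-- The seminorm `[x]ₙ = max_{1 ≤ i ≤ n} |xᵢ|` on `𝒮 = ℝ^ℕ` (components indexed from `0` to `n-1`). -/
def semS (n : ℕ) (x : ℕ → ℝ) : ℝ := ⨆ i : Fin n, |x (i : ℕ)|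

/-- `IsT t₀ f α T` says that `T` is the operator
`T(v)(t) = (𝕀 − ⟨α,𝕀⟩)⁻¹ · ⟨α, (∫₀^· f(s,v(s)) ds)|_{[0,t₀]}⟩ + ∫₀^t f(s,v(s)) ds`,
written componentwise; `P` is the restriction of the primitive `∫₀^· f_n(s,v(s)) ds` to `[0,t₀]`. -/
def IsT (t₀ : ℝ) (f : ℕ → ℝ → (ℕ → ℝ) → ℝ)
    (α : ℕ → C(Set.Icc (0:ℝ) t₀, ℝ) →L[ℝ] ℝ)
    (T : C(Set.Ici (0:ℝ), ℕ → ℝ) → C(Set.Ici (0:ℝ), ℕ → ℝ)) : Prop :=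
  ∀ v : C(Set.Ici (0:ℝ), ℕ → ℝ), ∀ n : ℕ,
    ∃ P : C(Set.Icc (0:ℝ) t₀, ℝ),
      (∀ s : Set.Icc (0:ℝ) t₀, P s = ∫ u in (0:ℝ)..(s : ℝ), f n u (v (pj u))) ∧
      ∀ t : Set.Ici (0:ℝ),
        T v t n = (1 - α n 1)⁻¹ * α n P + ∫ s in (0:ℝ)..(t : ℝ), f n s (v (pj s))

/-! For jointly continuous `f`, the primitive `∫ₐᵗ f(s, v(s)) ds` depends jointly continuously on
`(v, t)`, because evaluation `(v, s) ↦ v(s)` is continuous on the locally compact half line.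
Currying turns this into continuity of `v ↦ ∫ₐ^· f(s, v(s)) ds` in the compact-open topology over
any subset of `[a, ∞)`; each component of `T v` is such a primitive plus a constant that depends
continuously on a primitive. -/

section Volterra

variable {F E : Type*} {a : ℝ}

theorem integral_superposition_projIci [NormedAddCommGroup E] [NormedSpace ℝ E]
    (f : ℝ → F → E) (v : Ici a → F) {t : ℝ} (ht : a ≤ t) :
    ∫ s in a..t, f (projIci a s) (v (projIci a s)) = ∫ s in a..t, f s (v (projIci a s)) := by
  refine intervalIntegral.integral_congr fun s hs => ?_
  rw [uIcc_of_le ht] at hs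
  simp only [coe_projIci, max_eq_right hs.1]

variable [TopologicalSpace F] {f : ℝ → F → E}

theorem continuous_superposition_projIci [TopologicalSpace E]
    (hf : ContinuousOn (fun q : ℝ × F => f q.1 q.2) (Ici a ×ˢ univ)) :
    Continuous fun p : C(Ici a, F) × ℝ => f (projIci a p.2) (p.1 (projIci a p.2)) := by
  have : LocallyCompactSpace (Ici a) := isClosed_Ici.locallyCompactSpace
  have hproj : Continuous (projIci a) := by unfold projIci; fun_prop
  have hpair : Continuous fun p : C(Ici a, F) × ℝ =>
      ((projIci a p.2 : ℝ), p.1 (projIci a p.2)) := by fun_prop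
  exact hf.comp_continuous hpair fun p => ⟨(projIci a p.2).2, mem_univ _⟩

variable [NormedAddCommGroup E] [NormedSpace ℝ E]

theorem continuousOn_integral_superposition
    (hf : ContinuousOn (fun q : ℝ × F => f q.1 q.2) (Ici a ×ˢ univ)) :
    ContinuousOn (fun p : C(Ici a, F) × ℝ => ∫ s in a..p.2, f s (p.1 (projIci a s)))
      (univ ×ˢ Ici a) := by
  have hcont : Continuous fun p : C(Ici a, F) × ℝ =>
      ∫ s in a..p.2, f (projIci a s) (p.1 (projIci a s)) :=
    intervalIntegral.continuous_parametric_primitive_of_continuous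
      (f := fun (v : C(Ici a, F)) s => f (projIci a s) (v (projIci a s)))
      (continuous_superposition_projIci hf)
  exact hcont.continuousOn.congr fun p hp => (integral_superposition_projIci f p.1 hp.2).symm

/-- The nonlinear Volterra operator `v ↦ (∫ₐ^· f(s, v(s)) ds)|_K` for `K ⊆ [a, ∞)`, as a continuous
map between function spaces with the compact-open topology. The function `v` is extended to `ℝ` by
`projIci a`, which does not affect the integral. -/
def volterraMap (hf : ContinuousOn (fun q : ℝ × F => f q.1 q.2) (Ici a ×ˢ univ))
    {K : Set ℝ} (hK : K ⊆ Ici a) : C(C(Ici a, F), C(K, E)) :=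
  ContinuousMap.curry
    { toFun := fun p => ∫ s in a..p.2, f s (p.1 (projIci a s))
      continuous_toFun :=
        (continuousOn_integral_superposition hf).comp_continuous
          (continuous_fst.prodMk (continuous_subtype_val.comp continuous_snd))
          fun p => ⟨mem_univ _, hK p.2.2⟩ }

theorem volterraMap_apply (hf : ContinuousOn (fun q : ℝ × F => f q.1 q.2) (Ici a ×ˢ univ))
    {K : Set ℝ} (hK : K ⊆ Ici a) (v : C(Ici a, F)) (t : K) :
    volterraMap hf hK v t = ∫ s in a..t, f s (v (projIci a s)) := rfl

end Volterra

theorem pj_eq_projIci : pj = projIci 0 := rfl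

theorem IsT.apply_eq_volterraMap {t₀ : ℝ} {f : ℕ → ℝ → (ℕ → ℝ) → ℝ}
    {α : ℕ → C(Icc (0 : ℝ) t₀, ℝ) →L[ℝ] ℝ} {T : C(Ici (0 : ℝ), ℕ → ℝ) → C(Ici (0 : ℝ), ℕ → ℝ)}
    (hT : IsT t₀ f α T)
    (hf : ∀ n, ContinuousOn (fun q : ℝ × (ℕ → ℝ) => f n q.1 q.2) (Ici 0 ×ˢ univ))
    (v : C(Ici (0 : ℝ), ℕ → ℝ)) (t : Ici (0 : ℝ)) (n : ℕ) :
    T v t n = (1 - α n 1)⁻¹ * α n (volterraMap (hf n) Icc_subset_Ici_self v) +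
      volterraMap (hf n) Subset.rfl v t := by
  simp only [IsT, pj_eq_projIci] at hT
  obtain ⟨P, hP, hTv⟩ := hT v n
  have hP_eq : P = volterraMap (hf n) Icc_subset_Ici_self v :=
    ContinuousMap.ext fun s => (hP s).trans (volterraMap_apply (hf n) Icc_subset_Ici_self v s).symm
  rw [hTv t, hP_eq, volterraMap_apply]

theorem statement_2_general {ι : Type*} {E : ι → Type*} [∀ i, NormedAddCommGroup (E i)]
    [∀ i, NormedSpace ℝ (E i)] [∀ i, CompleteSpace (E i)] {F : Type*} [TopologicalSpace F]
    {a : ℝ} {K : Set ℝ} (hK : K ⊆ Ici a) {f : ∀ i, ℝ → F → E i}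
    (hf : ∀ i, ContinuousOn (fun q : ℝ × F => f i q.1 q.2) (Ici a ×ˢ univ))
    {Φ : ∀ i, C(K, E i) → E i} (hΦ : ∀ i, Continuous (Φ i))
    {T : C(Ici a, F) → C(Ici a, ∀ i, E i)}
    (hT : ∀ v t i, T v t i = Φ i (volterraMap (hf i) hK v) + volterraMap (hf i) Subset.rfl v t) :
    Continuous T := by
  have : LocallyCompactSpace (Ici a) := isClosed_Ici.locallyCompactSpace
  refine ContinuousMap.continuous_of_continuous_uncurry T (continuous_pi fun i => ?_)
  simp only [Function.uncurry_def, hT]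
  fun_prop

/-- Part of Proposition 2.2(ii): the operator `T` is continuous from `C(J,𝒮)` to `C(J,𝒮)`
(with the topology of uniform convergence on compact sets, i.e. the compact-open topology). -/
theorem statement_2
    (t₀ : ℝ) (ht₀ : 0 < t₀)
    (f : ℕ → ℝ → (ℕ → ℝ) → ℝ)
    (hf : ∀ n, ContinuousOn (fun q : ℝ × (ℕ → ℝ) => f n q.1 q.2)
      (Set.Ici (0:ℝ) ×ˢ (Set.univ : Set (ℕ → ℝ))))
    (α : ℕ → C(Set.Icc (0:ℝ) t₀, ℝ) →L[ℝ] ℝ)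
    (hα : ∀ n, α n 1 ≠ 1)
    (T : C(Set.Ici (0:ℝ), ℕ → ℝ) → C(Set.Ici (0:ℝ), ℕ → ℝ))
    (hT : IsT t₀ f α T) :
    Continuous T :=
  statement_2_general Icc_subset_Ici_self hf (fun n => continuous_const.mul (α n).continuous)
    (hT.apply_eq_volterraMap hf)
end
end

section
/- The operator T maps every bounded subset of C(J,𝒮) into a relatively compact subset of C(J,𝒮). (Part of Proposition 2.2(ii).) -/
open Set MeasureTheory

noncomputable section

/-!
Arzelà–Ascoli for functions with values in a product of proper spaces can be checked one component
at a time. For `v` in a bounded set, `v` maps each `[0, R]` into a fixed compact box, so the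
integrands `s ↦ fₙ(s, v(s))` are bounded on `[0, R]` by a constant independent of `v`. Hence the
components of `T v` are locally Lipschitz with constants independent of `v`, and at each `t` they
stay bounded because the primitives form a bounded subset of `C([0, t₀])`, which the boundary term
sends to a bounded set.
-/

open scoped Topology

lemma continuous_projIci {β : Type*} [LinearOrder β] [TopologicalSpace β] [OrderClosedTopology β]
    {a : β} : Continuous (projIci a) :=
  (continuous_const.max continuous_id).subtype_mk _

section ArzelaAscoli

variable {κ ι X E : Type*} [TopologicalSpace X]

lemma equicontinuousAt_pi_iff {Y : ι → Type*} [∀ i, UniformSpace (Y i)] {F : κ → X → ∀ i, Y i}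
    {x₀ : X} : EquicontinuousAt F x₀ ↔ ∀ i, EquicontinuousAt (fun k x ↦ F k x i) x₀ := by
  rw [Pi.uniformSpace_eq, equicontinuousAt_iInf_rng]
  refine forall_congr' fun i ↦ ?_
  let := UniformSpace.comap (fun y : ∀ i, Y i ↦ y i) inferInstance
  exact IsUniformInducing.equicontinuousAt_iff (u := fun y : ∀ i, Y i ↦ y i) ⟨rfl⟩

lemma isCompact_closure_range_of_equicontinuous [CompactlyCoherentSpace X] [UniformSpace E]
    [T2Space E] [CompleteSpace E] {F : κ → C(X, E)} (hF : Equicontinuous fun k ↦ ⇑(F k))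
    (hcompact : ∀ x, ∃ Q, IsCompact Q ∧ ∀ k, F k x ∈ Q) : IsCompact (closure (range F)) := by
  have hcover : ⋃₀ {K : Set X | IsCompact K} = univ :=
    eq_univ_of_forall fun x ↦ mem_sUnion_of_mem (mem_singleton x) isCompact_singleton
  have := UniformOnFun.t2Space_of_covering (β := E) hcover
  have hrange : Equicontinuous fun w : range F ↦ ⇑(w : C(X, E)) := by
    simpa only [Function.comp_def, apply_rangeSplitting] using! hF.comp (rangeSplitting F)
  exact ArzelaAscoli.isCompact_closure_of_isClosedEmbedding (fun _ hK ↦ hK)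
    ContinuousMap.isUniformEmbedding_toUniformOnFunIsCompact.isClosedEmbedding
    (fun K _ ↦ hrange.equicontinuousOn K) fun _ _ x _ ↦ by
      simpa only [forall_mem_range] using hcompact x

lemma isCompact_closure_range_of_equicontinuous_apply [CompactlyCoherentSpace X] [MetricSpace E]
    [ProperSpace E] {F : κ → C(X, ι → E)} (hF : ∀ i, Equicontinuous fun k x ↦ F k x i)
    (hbdd : ∀ i x, Bornology.IsBounded (range fun k ↦ F k x i)) :
    IsCompact (closure (range F)) :=
  isCompact_closure_range_of_equicontinuous
    (fun x ↦ equicontinuousAt_pi_iff.2 fun i ↦ hF i x) fun x ↦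
    ⟨univ.pi fun i ↦ closure (range fun k ↦ F k x i),
      isCompact_univ_pi fun i ↦ (hbdd i x).isCompact_closure,
      fun k _ _ ↦ subset_closure (mem_range_self k)⟩

end ArzelaAscoli

section BoundedSets

variable {𝕜 ι X Z E F : Type*} [TopologicalSpace X] [TopologicalSpace Z]
  [NontriviallyNormedField 𝕜] [NormedAddCommGroup E] [NormedSpace 𝕜 E] [ProperSpace E]
  [NormedAddCommGroup F] {M : Set C(X, ι → E)}

lemma exists_isCompact_forall_mapsTo_of_isVonNBounded (hM : Bornology.IsVonNBounded 𝕜 M)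
    {K : Set X} (hK : IsCompact K) :
    ∃ Q : Set (ι → E), IsCompact Q ∧ ∀ v ∈ M, MapsTo v K Q := by
  have := isCompact_iff_compactSpace.1 hK
  let restrictApply (i : ι) : C(X, ι → E) →L[𝕜] C(K, E) :=
    ((ContinuousLinearMap.proj (φ := fun _ : ι ↦ E) i).compLeftContinuous 𝕜 K).comp
      (ContinuousMap.compCLM 𝕜 (ι → E) ⟨Subtype.val, continuous_subtype_val⟩)
  have hbound (i : ι) : ∃ B, ∀ v ∈ M, ‖restrictApply i v‖ ≤ B := by
    simpa only [forall_mem_image] using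
      ((NormedSpace.isVonNBounded_iff 𝕜).1 (hM.image (restrictApply i))).exists_norm_le
  choose B hB using hbound
  refine ⟨univ.pi fun i ↦ Metric.closedBall 0 (B i),
    isCompact_univ_pi fun i ↦ isCompact_closedBall 0 (B i), fun v hv x hx i _ ↦ ?_⟩
  exact mem_closedBall_zero_iff.2 <|
    ((restrictApply i v).norm_coe_le_norm ⟨x, hx⟩).trans (hB i v hv)

lemma exists_forall_norm_superposition_le (hM : Bornology.IsVonNBounded 𝕜 M)
    {g : Z → (ι → E) → F} {p : Z → X} {K : Set Z} (hK : IsCompact K) (hp : ContinuousOn p K)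
    (hg : ContinuousOn (fun q : Z × (ι → E) ↦ g q.1 q.2) (K ×ˢ univ)) :
    ∃ C, ∀ v ∈ M, ∀ z ∈ K, ‖g z (v (p z))‖ ≤ C := by
  obtain ⟨Q, hQ, hMQ⟩ :=
    exists_isCompact_forall_mapsTo_of_isVonNBounded hM (hK.image_of_continuousOn hp)
  obtain ⟨C, hC⟩ := (hK.prod hQ).exists_bound_of_continuousOn
    (hg.mono (prod_mono_right (subset_univ Q)))
  exact ⟨C, fun v hv z hz ↦ hC (z, v (p z)) ⟨hz, hMQ v hv (mem_image_of_mem p hz)⟩⟩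

end BoundedSets

section Primitives

variable {κ E : Type*} [NormedAddCommGroup E] [NormedSpace ℝ E] {a : ℝ}

lemma norm_integral_le_of_forall_mem_Icc_norm_le {u : ℝ → E} {b t C : ℝ}
    (hu : ∀ s ∈ Icc a b, ‖u s‖ ≤ C) (ht : t ∈ Icc a b) :
    ‖∫ s in a..t, u s‖ ≤ C * (b - a) := by
  have hC : 0 ≤ C := (norm_nonneg _).trans (hu t ht)
  calc ‖∫ s in a..t, u s‖ ≤ C * |t - a| :=
        intervalIntegral.norm_integral_le_of_norm_le_const fun s hs ↦ by
          rw [uIoc_of_le ht.1] at hs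
          exact hu s ⟨hs.1.le, hs.2.trans ht.2⟩
    _ ≤ C * (b - a) := by
        rw [abs_of_nonneg (sub_nonneg.2 ht.1)]
        gcongr
        exact ht.2

lemma isBounded_range_of_eq_integral {b C : ℝ} {u : κ → ℝ → E} {P : κ → C(Icc a b, E)}
    (hu : ∀ k, ∀ s ∈ Icc a b, ‖u k s‖ ≤ C) (hP : ∀ k t, P k t = ∫ s in a..t, u k s) :
    Bornology.IsBounded (range P) := by
  -- The absolute value is only there for `b < a`, where `P k` has an empty domain.
  refine isBounded_iff_forall_norm_le.2 ⟨|C * (b - a)|, forall_mem_range.2 fun k ↦ ?_⟩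
  refine (ContinuousMap.norm_le _ (abs_nonneg _)).2 fun t ↦ ?_
  rw [hP]
  exact (norm_integral_le_of_forall_mem_Icc_norm_le (hu k) t.2).trans (le_abs_self _)

lemma equicontinuous_const_add_integral {c : κ → E} {u : κ → ℝ → E}
    (hint : ∀ k, ∀ t ≥ a, IntervalIntegrable (u k) volume a t)
    (hbdd : ∀ R, ∃ C, ∀ k, ∀ s ∈ Icc a R, ‖u k s‖ ≤ C) :
    Equicontinuous fun k (t : Ici a) ↦ c k + ∫ s in a..t, u k s := by
  intro t₀
  obtain ⟨C, hC⟩ := hbdd (t₀ + 1)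
  have hmodulus : Filter.Tendsto (fun t : Ici a ↦ C * |(t₀ : ℝ) - t|) (𝓝 t₀) (𝓝 0) := by
    have : Continuous fun t : Ici a ↦ C * |(t₀ : ℝ) - t| := by fun_prop
    simpa only [sub_self, abs_zero, mul_zero] using this.tendsto t₀
  refine Metric.equicontinuousAt_of_continuity_modulus _ hmodulus _ ?_
  have hnear : ∀ᶠ t : Ici a in 𝓝 t₀, (t : ℝ) < t₀ + 1 :=
    continuous_subtype_val.continuousAt.eventually_lt_const (lt_add_one _)
  filter_upwards [hnear] with t ht k
  rw [dist_add_left, dist_eq_norm,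
    intervalIntegral.integral_interval_sub_left (hint k t₀ t₀.2) (hint k t t.2)]
  refine intervalIntegral.norm_integral_le_of_norm_le_const fun s hs ↦ hC k s ?_
  exact uIcc_subset_Icc ⟨t.2, ht.le⟩ ⟨t₀.2, (lt_add_one _).le⟩ (uIoc_subset_uIcc hs)

end Primitives

theorem statement_3_general {ι E : Type*} [NormedAddCommGroup E] [NormedSpace ℝ E] [ProperSpace E]
    {t₀ : ℝ} {f : ι → ℝ → (ι → E) → E}
    (hf : ∀ i, ContinuousOn (fun q : ℝ × (ι → E) ↦ f i q.1 q.2) (Ici 0 ×ˢ univ))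
    {φ : ι → C(Icc 0 t₀, E) → E}
    (hφ : ∀ i B, Bornology.IsBounded B → Bornology.IsBounded (φ i '' B))
    {T : C(Ici (0 : ℝ), ι → E) → C(Ici (0 : ℝ), ι → E)}
    (hT : ∀ v i, ∃ P : C(Icc 0 t₀, E),
      (∀ s : Icc 0 t₀, P s = ∫ u in (0 : ℝ)..s, f i u (v (projIci 0 u))) ∧
      ∀ t : Ici (0 : ℝ), T v t i = φ i P + ∫ s in (0 : ℝ)..t, f i s (v (projIci 0 s)))
    {M : Set C(Ici (0 : ℝ), ι → E)} (hM : Bornology.IsVonNBounded ℝ M) :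
    IsCompact (closure (T '' M)) := by
  choose P hP hTP using hT
  have hcont (v : C(Ici (0 : ℝ), ι → E)) (i : ι) :
      ContinuousOn (fun s ↦ f i s (v (projIci 0 s))) (Ici 0) :=
    (hf i).comp (continuous_id.prodMk (v.continuous.comp continuous_projIci)).continuousOn
      fun s hs ↦ ⟨hs, mem_univ (v (projIci 0 s))⟩
  have hbound (i : ι) (R : ℝ) :
      ∃ C, ∀ v : M, ∀ s ∈ Icc 0 R, ‖f i s (v.1 (projIci 0 s))‖ ≤ C := by
    simpa only [Subtype.forall] using exists_forall_norm_superposition_le hM isCompact_Icc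
      continuous_projIci.continuousOn ((hf i).mono (prod_mono_left Icc_subset_Ici_self))
  rw [image_eq_range]
  refine isCompact_closure_range_of_equicontinuous_apply (fun i ↦ ?_) fun i t ↦ ?_
  · simp only [hTP]
    exact equicontinuous_const_add_integral
      (fun v t ht ↦ ((hcont v i).mono (uIcc_of_le ht ▸ Icc_subset_Ici_self)).intervalIntegrable)
      (hbound i)
  · obtain ⟨C₀, hC₀⟩ := hbound i t₀
    obtain ⟨C, hC⟩ := hbound i t
    have hprimitive : Bornology.IsBounded (range fun v : M ↦ P v i) :=
      isBounded_range_of_eq_integral hC₀ fun v ↦ hP v i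
    obtain ⟨D, hD⟩ := (hφ i _ hprimitive).exists_norm_le
    refine isBounded_iff_forall_norm_le.2 ⟨D + C * (t - 0), forall_mem_range.2 fun v ↦ ?_⟩
    rw [hTP]
    exact norm_add_le_of_le (hD _ (mem_image_of_mem _ (mem_range_self v)))
      (norm_integral_le_of_forall_mem_Icc_norm_le (hC v) ⟨t.2, le_rfl⟩)

/-- Part of Proposition 2.2(ii): the operator `T` maps every (von Neumann) bounded subset of
`C(J,𝒮)` into a relatively compact subset of `C(J,𝒮)`. -/
theorem statement_3
    (t₀ : ℝ) (ht₀ : 0 < t₀)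
    (f : ℕ → ℝ → (ℕ → ℝ) → ℝ)
    (hf : ∀ n, ContinuousOn (fun q : ℝ × (ℕ → ℝ) => f n q.1 q.2)
      (Set.Ici (0:ℝ) ×ˢ (Set.univ : Set (ℕ → ℝ))))
    (α : ℕ → C(Set.Icc (0:ℝ) t₀, ℝ) →L[ℝ] ℝ)
    (hα : ∀ n, α n 1 ≠ 1)
    (T : C(Set.Ici (0:ℝ), ℕ → ℝ) → C(Set.Ici (0:ℝ), ℕ → ℝ))
    (hT : IsT t₀ f α T) :
    ∀ M : Set C(Set.Ici (0:ℝ), ℕ → ℝ),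
      Bornology.IsVonNBounded ℝ M → IsCompact (closure (T '' M)) := fun _ hM ↦
  statement_3_general hf (φ := fun n P ↦ (1 - α n 1)⁻¹ * α n P)
    (fun n _ hB ↦ ((1 - α n 1)⁻¹ • α n).lipschitz.isBounded_image hB) hT hM
end
end

section
/- Fix p ∈ ℕ and suppose that [f(t,x)]_{n_p} ≤ A_p(t)[x]_{n_p} + B_p for all t ∈ [0,t₀] and x ∈ 𝒮, where A_p ∈ L¹(0,t₀) is nonnegative and B_p ≥ 0. Then for every x ∈ C(J,𝒮), 𝒫_p(T(x)) ≤ G_p·(‖A_p‖_{L¹}·𝒫_p(x) + t₀·B_p), where 𝒫_p(x) = max_{0≤t≤t₀} [x(t)]_{n_p} and G_p = [(𝕀 − ⟨α,𝕀⟩)^{-1}]_{n_p}·[‖α‖_*]_{n_p} + 1. -/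
open Set MeasureTheory

noncomputable section

/-- Restriction of the `n`-th component of `x ∈ C(J, 𝒮)` to `[0, t₀]`, as an element of `C([0,t₀], ℝ)`. -/
def restr (t₀ : ℝ) (x : C(Set.Ici (0:ℝ), ℕ → ℝ)) (n : ℕ) : C(Set.Icc (0:ℝ) t₀, ℝ) :=
  ⟨fun s => x ⟨s.1, s.2.1⟩ n,
    ((continuous_apply n).comp x.continuous).comp
      (continuous_inclusion Set.Icc_subset_Ici_self)⟩

/-- `𝒫ₙ(x) = max_{0 ≤ t ≤ t₀} [x(t)]ₙ`. -/
def Psem (t₀ : ℝ) (n : ℕ) (x : C(Set.Ici (0:ℝ), ℕ → ℝ)) : ℝ :=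
  ⨆ t : Set.Icc (0:ℝ) t₀, semS n (x ⟨t.1, t.2.1⟩)

/-- `𝒬ₙ(x) = max_{t₀ ≤ t ≤ t_p} e^{-θ(t-t₀)} [x(t)]ₙ`. -/
def Qsem (t₀ tp θ : ℝ) (ht₀ : 0 ≤ t₀) (n : ℕ) (x : C(Set.Ici (0:ℝ), ℕ → ℝ)) : ℝ :=
  ⨆ t : Set.Icc t₀ tp, Real.exp (-θ * (t.1 - t₀)) * semS n (x ⟨t.1, le_trans ht₀ t.2.1⟩)

/-- `Gₙ = [(𝕀 − ⟨α,𝕀⟩)⁻¹]ₙ · [‖α‖_*]ₙ + 1`. -/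
def Gconst (t₀ : ℝ) (α : ℕ → C(Set.Icc (0:ℝ) t₀, ℝ) →L[ℝ] ℝ) (n : ℕ) : ℝ :=
  semS n (fun i => (1 - α i 1)⁻¹) * semS n (fun i => ‖α i‖) + 1

/-!
On the first `n` components the seminorm `[·]ₙ` is the sup norm of `ℝⁿ`. For `0 ≤ s ≤ t₀` the
primitive `∫₀ˢ f(u, x(u)) du` is bounded in `[·]ₙ` by the integral over the whole interval of
`A(u) 𝒫ₙ(x) + B`, that is by `M = ‖A‖_{L¹} 𝒫ₙ(x) + t₀ B`. The nonlocal term of `T(x)` is then at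
most `[(𝕀 − ⟨α,𝕀⟩)⁻¹]ₙ [‖α‖_*]ₙ M`, and the integral term at most `M`.
-/

theorem semS_eq_norm (n : ℕ) (x : ℕ → ℝ) : semS n x = ‖fun i : Fin n => x i‖ :=
  le_antisymm
    (Real.iSup_le (fun i => norm_le_pi_norm (fun j : Fin n => x j) i) (norm_nonneg _))
    ((pi_norm_le_iff_of_nonneg (Real.iSup_nonneg fun _ => abs_nonneg _)).2 fun i =>
      le_ciSup (f := fun j : Fin n => |x j|) (Set.finite_range _).bddAbove i)

theorem continuous_semS (n : ℕ) : Continuous (semS n) := by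
  simp only [funext (semS_eq_norm n)]
  fun_prop

theorem semS_nonneg (n : ℕ) (x : ℕ → ℝ) : 0 ≤ semS n x :=
  Real.iSup_nonneg fun _ => abs_nonneg _

theorem semS_le_iff {n : ℕ} {x : ℕ → ℝ} {C : ℝ} (hC : 0 ≤ C) :
    semS n x ≤ C ↔ ∀ i < n, |x i| ≤ C := by
  rw [semS_eq_norm, pi_norm_le_iff_of_nonneg hC, Fin.forall_iff]
  rfl

theorem abs_le_semS {n i : ℕ} (hi : i < n) (x : ℕ → ℝ) : |x i| ≤ semS n x :=
  (semS_le_iff (semS_nonneg n x)).1 le_rfl i hi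

theorem semS_add_le (n : ℕ) (x y : ℕ → ℝ) : semS n (x + y) ≤ semS n x + semS n y := by
  simp only [semS_eq_norm]
  exact norm_add_le (fun i : Fin n => x i) (fun i => y i)

theorem semS_mul_le (n : ℕ) (x y : ℕ → ℝ) : semS n (x * y) ≤ semS n x * semS n y := by
  simp only [semS_eq_norm]
  exact norm_mul_le (fun i : Fin n => x i) (fun i => y i)

theorem semS_clm_apply_le {E : Type*} [SeminormedAddCommGroup E] [NormedSpace ℝ E] {n : ℕ}
    (φ : ℕ → E →L[ℝ] ℝ) {v : ℕ → E} {M : ℝ} (hM : 0 ≤ M) (hv : ∀ i < n, ‖v i‖ ≤ M) :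
    semS n (fun i => φ i (v i)) ≤ semS n (fun i => ‖φ i‖) * M := by
  refine (semS_le_iff (mul_nonneg (semS_nonneg _ _) hM)).2 fun i hi => ?_
  calc |φ i (v i)| ≤ ‖φ i‖ * M := (φ i).le_opNorm_of_le (hv i hi)
    _ ≤ semS n (fun i => ‖φ i‖) * M := by
      gcongr
      simpa only [abs_norm] using abs_le_semS hi fun i => ‖φ i‖

theorem semS_intervalIntegral_le {n : ℕ} {F : ℕ → ℝ → ℝ} {g : ℝ → ℝ} {a b s : ℝ}
    (hF : ∀ i < n, IntervalIntegrable (F i) volume a b) (hg : IntervalIntegrable g volume a b)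
    (hFg : ∀ u ∈ Icc a b, semS n (fun i => F i u) ≤ g u) (hs : s ∈ Icc a b) :
    semS n (fun i => ∫ u in a..s, F i u) ≤ ∫ u in a..b, g u := by
  have hab : a ≤ b := hs.1.trans hs.2
  have hg_nonneg : 0 ≤ ∫ u in a..b, g u :=
    intervalIntegral.integral_nonneg hab fun u hu => (semS_nonneg n _).trans (hFg u hu)
  refine (semS_le_iff hg_nonneg).2 fun i hi => ?_
  calc |∫ u in a..s, F i u| ≤ ∫ u in a..s, |F i u| :=
        intervalIntegral.abs_integral_le_integral_abs hs.1
    _ ≤ ∫ u in a..b, |F i u| :=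
        intervalIntegral.integral_mono_interval le_rfl hs.1 hs.2
          (ae_of_all _ fun u => abs_nonneg (F i u)) (hF i hi).abs
    _ ≤ ∫ u in a..b, g u :=
        intervalIntegral.integral_mono_on hab (hF i hi).abs hg fun u hu =>
          (abs_le_semS hi fun i => F i u).trans (hFg u hu)

theorem pj_of_nonneg {s : ℝ} (hs : 0 ≤ s) : pj s = ⟨s, hs⟩ :=
  Subtype.ext (max_eq_right hs)

theorem continuous_pj : Continuous pj :=
  (continuous_const.max continuous_id).subtype_mk _

theorem semS_le_Psem {t₀ t : ℝ} (ht : t ∈ Icc 0 t₀) (n : ℕ) (x : C(Ici (0 : ℝ), ℕ → ℝ)) :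
    semS n (x (pj t)) ≤ Psem t₀ n x := by
  have hcont : Continuous fun s : Icc (0 : ℝ) t₀ => semS n (x ⟨s, s.2.1⟩) :=
    (continuous_semS n).comp (x.continuous.comp (continuous_subtype_val.subtype_mk _))
  rw [pj_of_nonneg ht.1]
  exact le_ciSup (isCompact_range hcont).bddAbove ⟨t, ht⟩

theorem semS_primitive_le {t₀ s : ℝ} {n : ℕ} {f : ℕ → ℝ → (ℕ → ℝ) → ℝ}
    {x : C(Ici (0 : ℝ), ℕ → ℝ)} {A : ℝ → ℝ} {B : ℝ}
    (hf : ∀ i < n, IntervalIntegrable (fun u => f i u (x (pj u))) volume 0 t₀)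
    (hA_nonneg : ∀ t ∈ Icc 0 t₀, 0 ≤ A t) (hA_int : IntervalIntegrable A volume 0 t₀)
    (hgrowth : ∀ t ∈ Icc 0 t₀,
      semS n (fun i => f i t (x (pj t))) ≤ A t * semS n (x (pj t)) + B)
    (hs : s ∈ Icc 0 t₀) :
    semS n (fun i => ∫ u in (0 : ℝ)..s, f i u (x (pj u))) ≤
      (∫ t in (0 : ℝ)..t₀, A t) * Psem t₀ n x + t₀ * B := by
  have hAK_int := hA_int.mul_const (Psem t₀ n x)
  have hbound : ∀ t ∈ Icc 0 t₀,
      semS n (fun i => f i t (x (pj t))) ≤ A t * Psem t₀ n x + B := fun t ht =>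
    (hgrowth t ht).trans <| by
      have := mul_le_mul_of_nonneg_left (semS_le_Psem ht n x) (hA_nonneg t ht)
      gcongr
  calc semS n (fun i => ∫ u in (0 : ℝ)..s, f i u (x (pj u)))
      ≤ ∫ t in (0 : ℝ)..t₀, (A t * Psem t₀ n x + B) :=
        semS_intervalIntegral_le hf (hAK_int.add intervalIntegrable_const) hbound hs
    _ = (∫ t in (0 : ℝ)..t₀, A t) * Psem t₀ n x + t₀ * B := by
        rw [intervalIntegral.integral_add hAK_int intervalIntegrable_const,
          intervalIntegral.integral_mul_const, intervalIntegral.integral_const, sub_zero,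
          smul_eq_mul]

theorem Gconst_nonneg (t₀ : ℝ) (α : ℕ → C(Icc (0 : ℝ) t₀, ℝ) →L[ℝ] ℝ) (n : ℕ) :
    0 ≤ Gconst t₀ α n :=
  add_nonneg (mul_nonneg (semS_nonneg _ _) (semS_nonneg _ _)) zero_le_one

theorem IsT.Psem_le {t₀ : ℝ} {f : ℕ → ℝ → (ℕ → ℝ) → ℝ}
    {α : ℕ → C(Icc (0 : ℝ) t₀, ℝ) →L[ℝ] ℝ}
    {T : C(Ici (0 : ℝ), ℕ → ℝ) → C(Ici (0 : ℝ), ℕ → ℝ)} (hT : IsT t₀ f α T)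
    {x : C(Ici (0 : ℝ), ℕ → ℝ)} {n : ℕ} {M : ℝ} (hM : 0 ≤ M)
    (hprim : ∀ s ∈ Icc 0 t₀, semS n (fun i => ∫ u in (0 : ℝ)..s, f i u (x (pj u))) ≤ M) :
    Psem t₀ n (T x) ≤ Gconst t₀ α n * M := by
  choose P hP hTx using hT x
  have hP_norm : ∀ i < n, ‖P i‖ ≤ M := fun i hi =>
    (ContinuousMap.norm_le _ hM).2 fun s => by
      rw [hP i s]
      exact (abs_le_semS hi _).trans (hprim s s.2)
  refine Real.iSup_le (fun t => ?_) (mul_nonneg (Gconst_nonneg t₀ α n) hM)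
  set c : ℕ → ℝ := fun i => (1 - α i 1)⁻¹
  set y : ℕ → ℝ := fun i => α i (P i)
  set z : ℕ → ℝ := fun i => ∫ u in (0 : ℝ)..t, f i u (x (pj u))
  have hTxt : T x ⟨t, t.2.1⟩ = c * y + z := funext fun i => hTx i ⟨t, t.2.1⟩
  calc semS n (T x ⟨t, t.2.1⟩) = semS n (c * y + z) := by rw [hTxt]
    _ ≤ semS n c * semS n y + semS n z := by
        grw [semS_add_le, semS_mul_le]
    _ ≤ semS n c * (semS n (fun i => ‖α i‖) * M) + M :=
        add_le_add
          (mul_le_mul_of_nonneg_left (semS_clm_apply_le α hM hP_norm) (semS_nonneg n c))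
          (hprim t t.2)
    _ = Gconst t₀ α n * M := by
        unfold Gconst
        ring

theorem intervalIntegrable_comp_pj {g : ℝ → (ℕ → ℝ) → ℝ}
    (hg : ContinuousOn (fun q : ℝ × (ℕ → ℝ) => g q.1 q.2) (Ici 0 ×ˢ univ))
    (x : C(Ici (0 : ℝ), ℕ → ℝ)) {t : ℝ} (ht : 0 ≤ t) :
    IntervalIntegrable (fun u => g u (x (pj u))) volume 0 t := by
  have hgraph : Continuous fun u => (u, x (pj u)) :=
    continuous_id.prodMk (x.continuous.comp continuous_pj)
  refine ContinuousOn.intervalIntegrable_of_Icc ht ?_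
  exact hg.comp hgraph.continuousOn fun u hu => ⟨hu.1, mem_univ _⟩

theorem statement_8_general
    {t₀ : ℝ} (ht₀ : 0 ≤ t₀) {n : ℕ} {f : ℕ → ℝ → (ℕ → ℝ) → ℝ}
    {α : ℕ → C(Icc (0 : ℝ) t₀, ℝ) →L[ℝ] ℝ} (hα : ∀ i < n, α i 1 ≠ 1)
    {T : C(Ici (0 : ℝ), ℕ → ℝ) → C(Ici (0 : ℝ), ℕ → ℝ)} (hT : IsT t₀ f α T)
    {x : C(Ici (0 : ℝ), ℕ → ℝ)} {A : ℝ → ℝ} {B : ℝ}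
    (hf : ∀ i < n, IntervalIntegrable (fun u => f i u (x (pj u))) volume 0 t₀)
    (hA_nonneg : ∀ t ∈ Icc 0 t₀, 0 ≤ A t) (hA_int : IntervalIntegrable A volume 0 t₀)
    (hgrowth : ∀ t ∈ Icc 0 t₀,
      semS n (fun i => f i t (x (pj t))) ≤ A t * semS n (x (pj t)) + B) :
    Psem t₀ n (T x) ≤
      Gconst t₀ α n * ((∫ t in (0 : ℝ)..t₀, A t) * Psem t₀ n x + t₀ * B) := by
  have hprim := fun s (hs : s ∈ Icc 0 t₀) => semS_primitive_le hf hA_nonneg hA_int hgrowth hs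
  exact hT.Psem_le ((semS_nonneg n _).trans (hprim 0 (left_mem_Icc.2 ht₀))) hprim

/-- Estimate (3.7) in the proof of the main theorem:
`𝒫_p(T(x)) ≤ G_p (‖A_p‖_{L¹} 𝒫_p(x) + t₀ B_p)`. -/
theorem statement_8
    (t₀ : ℝ) (ht₀ : 0 < t₀)
    (f : ℕ → ℝ → (ℕ → ℝ) → ℝ)
    (hf : ∀ n, ContinuousOn (fun q : ℝ × (ℕ → ℝ) => f n q.1 q.2)
      (Set.Ici (0:ℝ) ×ˢ (Set.univ : Set (ℕ → ℝ))))
    (α : ℕ → C(Set.Icc (0:ℝ) t₀, ℝ) →L[ℝ] ℝ)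
    (hα : ∀ n, α n 1 ≠ 1)
    (T : C(Set.Ici (0:ℝ), ℕ → ℝ) → C(Set.Ici (0:ℝ), ℕ → ℝ))
    (hT : IsT t₀ f α T)
    (np : ℕ → ℕ) (hnp : StrictMono np) (hnp0 : ∀ q, 0 < np q)
    (p : ℕ)
    (A : ℝ → ℝ) (B : ℝ)
    (hA_nonneg : ∀ t ∈ Set.Icc (0:ℝ) t₀, 0 ≤ A t)
    (hA_int : IntervalIntegrable A MeasureTheory.volume 0 t₀)
    (hB : 0 ≤ B)
    (hgrowth : ∀ t ∈ Set.Icc (0:ℝ) t₀, ∀ x : ℕ → ℝ,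
      semS (np p) (fun i => f i t x) ≤ A t * semS (np p) x + B) :
    ∀ x : C(Set.Ici (0:ℝ), ℕ → ℝ),
      Psem t₀ (np p) (T x) ≤
        Gconst t₀ α (np p) * ((∫ t in (0:ℝ)..t₀, A t) * Psem t₀ (np p) x + t₀ * B) := by
  intro x
  exact statement_8_general ht₀.le (fun i _ => hα i) hT
    (fun i _ => intervalIntegrable_comp_pj (hf i) x ht₀.le) hA_nonneg hA_int
    fun t ht => hgrowth t ht (x (pj t))
end
end
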